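/- Let l ≥ 1 and k ≥ 0 be integers, ρ₀ > 0, and z ∈ ℂ with Re z ≥ 0. There exists a constant c > 0 such that for all R with ρ₀² < R ≤ ρ₀² + 1 and all a ≥ 1/2, ( ∫_{‖H‖ > a} ( Σ_{|α| ≤ 2k} |∂^α (ℱ^{−1} s_R^z)(H)| )² dH )^{1/2} ≤ c a^{−Re z − 1/2}. -/

import Mathlib

open Real MeasureTheory

/-- s_R^z(λ) = (1 − (ρ₀² + ‖λ‖²)/R)_+^z on ℝ^l. -/
noncomputable def sRz (l : ℕ) (ρ₀ R : ℝ) (z : ℂ) (lam : EuclideanSpace ℝ (Fin l)) : ℂ :=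
  if 0 < 1 - (ρ₀ ^ 2 + ‖lam‖ ^ 2) / R then
    ((1 - (ρ₀ ^ 2 + ‖lam‖ ^ 2) / R : ℝ) : ℂ) ^ z
  else 0

/-- The inverse Fourier transform (ℱ^{−1}g)(H) = (2π)^{−l} ∫_{ℝ^l} g(λ) e^{i⟨λ,H⟩} dλ. -/
noncomputable def invFT (l : ℕ) (g : EuclideanSpace ℝ (Fin l) → ℂ)
    (H : EuclideanSpace ℝ (Fin l)) : ℂ :=
  (((2 * Real.pi) ^ l : ℝ) : ℂ)⁻¹ *
    ∫ lam : EuclideanSpace ℝ (Fin l),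
      g lam * Complex.exp (Complex.I * ((inner ℝ lam H : ℝ) : ℂ))

/-- Iterated partial derivative of a function on ℝ^l along a list of coordinate directions. -/
noncomputable def mderiv {l : ℕ} : List (Fin l) → (EuclideanSpace ℝ (Fin l) → ℂ) →
    EuclideanSpace ℝ (Fin l) → ℂ
  | [], f => f
  | i :: L, f => fun x => fderiv ℝ (mderiv L f) x (EuclideanSpace.single i 1)

/-- The partial derivative ∂^α of a function on ℝ^l associated with the multi-index
α : Fin l → ℕ (α i derivatives in the i-th coordinate direction). -/
noncomputable def partialD {l : ℕ} (α : Fin l → ℕ) (f : EuclideanSpace ℝ (Fin l) → ℂ) :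
    EuclideanSpace ℝ (Fin l) → ℂ :=
  mderiv ((List.finRange l).flatMap fun i => List.replicate (α i) i) f

/-- Bounded measurable functions with bounded support. -/
def Nice {l : ℕ} (g : EuclideanSpace ℝ (Fin l) → ℂ) : Prop :=
  Measurable g ∧ (∃ B : ℝ, ∀ x, ‖g x‖ ≤ B) ∧ ∃ K : ℝ, ∀ x, K < ‖x‖ → g x = 0

lemma Nice.memLp {l : ℕ} {g : EuclideanSpace ℝ (Fin l) → ℂ} (hg : Nice g) (p : ENNReal) :
    MemLp g p volume := by
  obtain ⟨hm, ⟨B, hB⟩, K, hK⟩ := hg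
  have h1 : MemLp g p (volume.restrict (Metric.closedBall 0 K)) := by
    have : IsFiniteMeasure (volume.restrict (Metric.closedBall (0 : EuclideanSpace ℝ (Fin l)) K)) :=
      ⟨by simpa using measure_closedBall_lt_top⟩
    exact MemLp.of_bound hm.aestronglyMeasurable B (Filter.Eventually.of_forall hB)
  have h2 := (memLp_indicator_iff_restrict (f := g) (p := p) (μ := volume)
    (s := Metric.closedBall 0 K) measurableSet_closedBall).2 h1
  have : (Metric.closedBall 0 K).indicator g = g := by
    ext x
    by_cases hx : x ∈ Metric.closedBall 0 K
    · simp [hx]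
    · rw [Set.indicator_of_notMem hx, hK]
      simpa using hx
  rwa [this] at h2

lemma Nice.integrable {l : ℕ} {g : EuclideanSpace ℝ (Fin l) → ℂ} (hg : Nice g) :
    Integrable g := memLp_one_iff_integrable.1 (hg.memLp 1)

lemma Nice.coord {l : ℕ} {g : EuclideanSpace ℝ (Fin l) → ℂ} (hg : Nice g) (i : Fin l) :
    Nice (fun x => Complex.I * (x i : ℂ) * g x) := by
  obtain ⟨hm, ⟨B, hB⟩, K, hK⟩ := hg
  refine ⟨by fun_prop, ⟨|K| * B, fun x => ?_⟩, K, fun x hx => by simp [hK x hx]⟩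
  by_cases hx : K < ‖x‖
  · beta_reduce
    rw [hK x hx]
    have : 0 ≤ B := (norm_nonneg _).trans (hB x)
    simp; positivity
  · have h1 : ‖x i‖ ≤ |K| := (PiLp.norm_apply_le x i).trans ((not_lt.1 hx).trans (le_abs_self K))
    rw [norm_mul, norm_mul, Complex.norm_I, one_mul, Complex.norm_real]
    exact mul_le_mul h1 (hB x) (norm_nonneg _) (abs_nonneg _)

lemma Nice.norm_mul {l : ℕ} {g : EuclideanSpace ℝ (Fin l) → ℂ} (hg : Nice g) :
    Integrable (fun x => ‖x‖ * ‖g x‖) := by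
  have : Nice (fun x => ((‖x‖ * ‖g x‖ : ℝ) : ℂ)) := by
    obtain ⟨hm, ⟨B, hB⟩, K, hK⟩ := hg
    refine ⟨by fun_prop, ⟨|K| * B, fun x => ?_⟩, K, fun x hx => by simp [hK x hx]⟩
    by_cases hx : K < ‖x‖
    · beta_reduce
      rw [hK x hx]
      have : 0 ≤ B := (norm_nonneg _).trans (hB x)
      simp; positivity
    · have h1 : ‖x‖ ≤ |K| := ((not_lt.1 hx).trans (le_abs_self K))
      rw [Complex.norm_real, _root_.norm_mul, norm_norm, norm_norm]
      exact mul_le_mul h1 (hB x) (norm_nonneg _) (abs_nonneg _)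
  have h := this.integrable.norm
  refine h.congr (Filter.Eventually.of_forall fun x => ?_)
  simp

lemma Nice.diff {l : ℕ} {g : EuclideanSpace ℝ (Fin l) → ℂ} (hg : Nice g)
    (v : EuclideanSpace ℝ (Fin l)) : Nice (fun x => g (x + v) - g x) := by
  obtain ⟨hm, ⟨B, hB⟩, K, hK⟩ := hg
  refine ⟨by fun_prop, ⟨B + B, fun x => (norm_sub_le _ _).trans (add_le_add (hB _) (hB _))⟩,
    K + ‖v‖, fun x hx => ?_⟩
  have h2 : ‖x‖ ≤ ‖x + v‖ + ‖v‖ := by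
    simpa using norm_sub_le (x + v) v
  beta_reduce
  rw [hK, hK, sub_zero]
  · linarith [norm_nonneg v]
  · linarith

noncomputable def LL (l : ℕ) : EuclideanSpace ℝ (Fin l) →L[ℝ] EuclideanSpace ℝ (Fin l) →L[ℝ] ℝ :=
  (-(2 * π)⁻¹ : ℝ) • innerSL ℝ

lemma LL_apply {l : ℕ} (v w : EuclideanSpace ℝ (Fin l)) :
    LL l v w = -(2 * π)⁻¹ * inner ℝ v w := by
  simp [LL]
  rfl

lemma LL12_apply {l : ℕ} (v w : EuclideanSpace ℝ (Fin l)) :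
    (LL l).toLinearMap₁₂ v w = -(2 * π)⁻¹ * inner ℝ v w := LL_apply v w

lemma invFT_eq (l : ℕ) (g : EuclideanSpace ℝ (Fin l) → ℂ) (H : EuclideanSpace ℝ (Fin l)) :
    invFT l g H = (((2 * Real.pi) ^ l : ℝ) : ℂ)⁻¹ *
      VectorFourier.fourierIntegral Real.fourierChar volume (LL l).toLinearMap₁₂ g H := by
  unfold invFT VectorFourier.fourierIntegral
  congr 2
  ext x
  rw [LL12_apply, Circle.smul_def, Real.fourierChar_apply, smul_eq_mul, mul_comm]
  congr 2
  have : (2 * π * -(-(2 * π)⁻¹ * inner ℝ x H) : ℝ) = inner ℝ x H := by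
    have := Real.pi_pos
    field_simp
  rw [this, mul_comm]

lemma Nice.hasFDerivAt {l : ℕ} {g : EuclideanSpace ℝ (Fin l) → ℂ} (hg : Nice g)
    (H : EuclideanSpace ℝ (Fin l)) (i : Fin l) :
    fderiv ℝ (invFT l g) H (EuclideanSpace.single i 1) =
      invFT l (fun x => Complex.I * (x i : ℂ) * g x) H := by
  have h0 : invFT l g = fun H => (((2 * Real.pi) ^ l : ℝ) : ℂ)⁻¹ *
      VectorFourier.fourierIntegral Real.fourierChar volume (LL l).toLinearMap₁₂ g H := by
    ext H; exact invFT_eq l g H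
  have h1 := VectorFourier.hasFDerivAt_fourierIntegral (LL l) hg.integrable hg.norm_mul H
  have h2 := h1.const_mul (((2 * Real.pi) ^ l : ℝ) : ℂ)⁻¹
  rw [h0, h2.fderiv, invFT_eq]
  simp only [_root_.smul_apply, smul_eq_mul]
  congr 1
  unfold VectorFourier.fourierIntegral
  rw [ContinuousLinearMap.integral_apply]
  · congr 1
    ext x
    simp only [Circle.smul_def, _root_.smul_apply, VectorFourier.fourierSMulRight_apply, LL_apply]
    congr 1
    simp only [EuclideanSpace.inner_single_right, smul_eq_mul, Complex.real_smul]
    have := Real.pi_pos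
    push_cast
    have : (π : ℂ) ≠ 0 := by exact_mod_cast this.ne'
    simp
    field_simp
  · refine (VectorFourier.fourierIntegral_convergent_iff (L := (LL l).toLinearMap₁₂) Real.continuous_fourierChar ?_ H).2 ?_
    · exact (LL l).continuous₂
    · refine (hg.norm_mul.const_mul (2 * π * ‖LL l‖)).mono' hg.1.aestronglyMeasurable.fourierSMulRight ?_
      refine Filter.Eventually.of_forall fun x => ?_
      have := VectorFourier.norm_fourierSMulRight_le (LL l) g x
      linarith

lemma Nice.continuous {l : ℕ} {g : EuclideanSpace ℝ (Fin l) → ℂ} (hg : Nice g) :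
    Continuous (invFT l g) := by
  have h0 : invFT l g = fun H => (((2 * Real.pi) ^ l : ℝ) : ℂ)⁻¹ *
      VectorFourier.fourierIntegral Real.fourierChar volume (LL l).toLinearMap₁₂ g H := by
    ext H; exact invFT_eq l g H
  rw [h0]
  exact (VectorFourier.differentiable_fourierIntegral (LL l) hg.integrable hg.norm_mul).continuous.const_mul _

/-- g multiplied by the monomial of a list of coordinates. -/
noncomputable def monoMul {l : ℕ} (g : EuclideanSpace ℝ (Fin l) → ℂ) :
    List (Fin l) → EuclideanSpace ℝ (Fin l) → ℂ
  | [] => g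
  | i :: L => fun x => Complex.I * (x i : ℂ) * monoMul g L x

lemma Nice.monoMul {l : ℕ} {g : EuclideanSpace ℝ (Fin l) → ℂ} (hg : Nice g) (L : List (Fin l)) :
    Nice (monoMul g L) := by
  induction L with
  | nil => exact hg
  | cons i L ih => exact ih.coord i

lemma mderiv_invFT {l : ℕ} {g : EuclideanSpace ℝ (Fin l) → ℂ} (hg : Nice g) (L : List (Fin l)) :
    mderiv L (invFT l g) = invFT l (monoMul g L) := by
  induction L with
  | nil => rfl
  | cons i L ih =>
    ext x
    simp only [mderiv, ih]
    exact (hg.monoMul L).hasFDerivAt x i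

lemma invFT_diff {l : ℕ} {g : EuclideanSpace ℝ (Fin l) → ℂ} (hg : Nice g)
    (v H : EuclideanSpace ℝ (Fin l)) :
    invFT l (fun x => g (x + v) - g x) H =
      (Complex.exp (-Complex.I * ((inner ℝ v H : ℝ) : ℂ)) - 1) * invFT l g H := by
  have hi : Integrable (fun x => g x * Complex.exp (Complex.I * ((inner ℝ x H : ℝ) : ℂ))) := by
    refine hg.integrable.mul_bdd (c := 1) (by fun_prop) ?_
    refine Filter.Eventually.of_forall fun x => ?_
    rw [mul_comm, Complex.norm_exp_ofReal_mul_I]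
  have h1 : ∀ x, (g (x + v) - g x) * Complex.exp (Complex.I * ((inner ℝ x H : ℝ) : ℂ)) =
    Complex.exp (-Complex.I * ((inner ℝ v H : ℝ) : ℂ)) * (g (x + v) * Complex.exp (Complex.I * ((inner ℝ (x + v) H : ℝ) : ℂ))) - g x * Complex.exp (Complex.I * ((inner ℝ x H : ℝ) : ℂ)) := by
    intro x
    rw [inner_add_left, sub_mul, mul_left_comm, ← Complex.exp_add]
    congr 3
    push_cast
    ring
  unfold invFT
  simp_rw [h1]
  rw [integral_sub ((hi.comp_add_right v).const_mul _) hi, integral_const_mul,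
    integral_add_right_eq_self (fun x => g x * Complex.exp (Complex.I * ((inner ℝ x H : ℝ) : ℂ))) v]
  ring

open FourierTransform SchwartzMap in
lemma plancherel_nice {l : ℕ} {g : EuclideanSpace ℝ (Fin l) → ℂ} (hg : Nice g) :
    ∫⁻ x, ‖𝓕 g x‖ₑ ^ 2 = ∫⁻ x, ‖g x‖ₑ ^ 2 := by
  have h2 := hg.memLp 2
  have h1 := hg.integrable
  set G := h2.toLp g with hG
  have hGg : G =ᵐ[volume] g := h2.coeFn_toLp
  have hcont : Continuous (𝓕 g) :=
    VectorFourier.fourierIntegral_continuous Real.continuous_fourierChar continuous_inner h1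
  have key : ((𝓕 G : Lp (α := EuclideanSpace ℝ (Fin l)) ℂ 2 volume) : EuclideanSpace ℝ (Fin l) → ℂ) =ᵐ[volume] 𝓕 g := by
    refine ae_eq_of_integral_contDiff_smul_eq ((Lp.memLp _).locallyIntegrable (by norm_num)) hcont.locallyIntegrable ?_
    intro φ hφ hφc
    have hφ' : ContDiff ℝ (⊤ : ℕ∞) (fun x => (φ x : ℂ)) := Complex.ofRealCLM.contDiff.comp hφ
    have hφc' : HasCompactSupport (fun x => (φ x : ℂ)) := hφc.comp_left (g := fun x : ℝ => (x : ℂ)) (by simp)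
    set ψ : 𝓢(EuclideanSpace ℝ (Fin l), ℂ) := hφc'.toSchwartzMap hφ' with hψ
    have e1 := congrArg (fun T => T ψ) (Lp.fourier_toTemperedDistribution_eq G)
    simp only [TemperedDistribution.fourier_apply, Lp.toTemperedDistribution_apply] at e1
    have e2 : ∫ x, φ x • (𝓕 G : Lp (α := EuclideanSpace ℝ (Fin l)) ℂ 2 volume) x = ∫ x, ψ x • (𝓕 G : Lp (α := EuclideanSpace ℝ (Fin l)) ℂ 2 volume) x := by
      congr 1
    have e3 : ∫ x, φ x • 𝓕 g x = ∫ x, 𝓕 g x • ψ x := by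
      congr 1; ext x; simp [ψ, mul_comm]
    rw [e2, e3, ← e1]
    have e4 := VectorFourier.integral_fourierIntegral_smul_eq_flip (μ := volume) (ν := volume) (L := (innerₗ (EuclideanSpace ℝ (Fin l)))) (f := g) (g := ψ) Real.continuous_fourierChar continuous_inner h1 ψ.integrable
    refine Eq.trans ?_ e4.symm
    refine integral_congr_ae ?_
    filter_upwards [hGg] with x hx
    rw [hx, flip_innerₗ, smul_eq_mul, smul_eq_mul, mul_comm]
    rfl
  have hn : ‖(𝓕 G : Lp (α := EuclideanSpace ℝ (Fin l)) ℂ 2 volume)‖ₑ = ‖G‖ₑ := by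
    rw [← ofReal_norm, ← ofReal_norm, Lp.norm_fourier_eq]
  rw [Lp.enorm_def, Lp.enorm_def, eLpNorm_congr_ae key, eLpNorm_congr_ae hGg] at hn
  rw [eLpNorm_eq_lintegral_rpow_enorm_toReal (by norm_num) (by norm_num), eLpNorm_eq_lintegral_rpow_enorm_toReal (by norm_num) (by norm_num)] at hn
  have h3 := (ENNReal.rpow_left_injective (by norm_num)) hn
  simpa using h3

open FourierTransform in
lemma plancherel_invFT (l : ℕ) : ∃ C : NNReal, ∀ g : EuclideanSpace ℝ (Fin l) → ℂ, Nice g →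
    ∫⁻ x, ‖invFT l g x‖ₑ ^ 2 = C * ∫⁻ x, ‖g x‖ₑ ^ 2 := by
  have hpi := Real.pi_pos
  set s : ℝ := -(2 * π)⁻¹ with hs
  have hs0 : s ≠ 0 := by rw [hs]; simp [hpi.ne']
  set c : ℂ := (((2 * Real.pi) ^ l : ℝ) : ℂ)⁻¹
  refine ⟨‖c‖₊ ^ 2 * (|(s ^ l)⁻¹|).toNNReal, fun g hg => ?_⟩
  have h1 : ∀ x, invFT l g x = c * 𝓕 g (s • x) := by
    intro x
    rw [invFT_eq, Real.fourier_eq]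
    congr 1
    unfold VectorFourier.fourierIntegral
    congr 1
    ext y
    rw [LL12_apply, real_inner_smul_right]
  have hcont : Continuous (𝓕 g) :=
    VectorFourier.fourierIntegral_continuous Real.continuous_fourierChar continuous_inner hg.integrable
  have h2 : ∫⁻ x, ‖𝓕 g (s • x)‖ₑ ^ 2 = ENNReal.ofReal |(s ^ l)⁻¹| * ∫⁻ x, ‖𝓕 g x‖ₑ ^ 2 := by
    have := Measure.map_addHaar_smul (volume : Measure (EuclideanSpace ℝ (Fin l))) hs0
    rw [finrank_euclideanSpace_fin] at this
    rw [← smul_eq_mul, ← lintegral_smul_measure, ← this, lintegral_map (hcont.measurable.enorm.pow_const 2) (by fun_prop)]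
  simp_rw [h1, enorm_mul, mul_pow]
  have h3 : Measurable (fun x => ‖𝓕 g (s • x)‖ₑ ^ 2) :=
    (hcont.comp (continuous_const_smul s)).measurable.enorm.pow_const 2
  rw [lintegral_const_mul _ h3, h2, plancherel_nice hg, ← mul_assoc]
  congr 1

/-- Forward difference. -/
def fd {V : Type*} [Add V] (v : V) (g : V → ℂ) : V → ℂ := fun x => g (x + v) - g x

lemma Nice.fd {l : ℕ} {g : EuclideanSpace ℝ (Fin l) → ℂ} (hg : Nice g)
    (v : EuclideanSpace ℝ (Fin l)) (m : ℕ) : Nice ((fd v)^[m] g) := by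
  induction m generalizing g with
  | zero => exact hg
  | succ m ih => exact ih (hg.diff v)

lemma invFT_fd {l : ℕ} {g : EuclideanSpace ℝ (Fin l) → ℂ} (hg : Nice g)
    (v H : EuclideanSpace ℝ (Fin l)) (m : ℕ) :
    invFT l ((fd v)^[m] g) H =
      (Complex.exp (-Complex.I * ((inner ℝ v H : ℝ) : ℂ)) - 1) ^ m * invFT l g H := by
  induction m generalizing g with
  | zero => simp
  | succ m ih =>
    have := ih (hg.diff v)
    rw [invFT_diff hg] at this
    rw [Function.iterate_succ_apply, pow_succ, mul_assoc, ← this]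
    rfl

lemma fd_congr {V W : Type*} [AddCommMonoid V] [AddCommMonoid W] (v : V) (w : W) (m : ℕ)
    (g : V → ℂ) (F : W → ℂ) (x : V) (y : W)
    (h : ∀ j : ℕ, j ≤ m → g (x + j • v) = F (y + j • w)) :
    (fd v)^[m] g x = (fd w)^[m] F y := by
  induction m generalizing g F with
  | zero => simpa using h 0 le_rfl
  | succ m ih =>
    rw [Function.iterate_succ_apply, Function.iterate_succ_apply]
    apply ih
    intro j hj
    have h1 := h j (by omega)
    have h2 := h (j + 1) (by omega)
    simp only [fd]
    rw [add_assoc, add_assoc, ← succ_nsmul, ← succ_nsmul, h1, h2]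

lemma fd_crude {V : Type*} [AddCommMonoid V] (v : V) (m : ℕ) (M : ℝ)
    (g : V → ℂ) (x : V)
    (h : ∀ j : ℕ, j ≤ m → ‖g (x + j • v)‖ ≤ M) :
    ‖(fd v)^[m] g x‖ ≤ 2 ^ m * M := by
  induction m generalizing g M with
  | zero => simpa using h 0 le_rfl
  | succ m ih =>
    rw [Function.iterate_succ_apply, pow_succ, mul_assoc]
    apply ih
    intro j hj
    have h1 := h j (by omega)
    have h2 := h (j + 1) (by omega)
    simp only [fd]
    rw [add_assoc, ← succ_nsmul]
    exact (norm_sub_le _ _).trans (by linarith)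

lemma fd_holo (m : ℕ) : ∃ C : ℝ, 0 < C ∧ ∀ (D M h : ℝ) (F : ℂ → ℂ), 0 < D → 0 ≤ h →
    4 ^ m * h ≤ D → DifferentiableOn ℂ F (Metric.ball 0 D) →
    (∀ w ∈ Metric.ball (0 : ℂ) D, ‖F w‖ ≤ M) →
    ‖(fd (h : ℂ))^[m] F 0‖ ≤ C * (h / D) ^ m * M := by
  induction m with
  | zero =>
    refine ⟨1, one_pos, fun D M h F hD hh _ _ hM => ?_⟩
    simpa using hM 0 (by simpa using hD)
  | succ m ih =>
    obtain ⟨C, hC, ih⟩ := ih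
    refine ⟨C * 2 ^ m * 4, by positivity, fun D M h F hD hh hhD hF hM => ?_⟩
    have hpow : (1 : ℝ) ≤ 4 ^ m := one_le_pow₀ (by norm_num)
    have hmh : h ≤ 4 ^ m * h := le_mul_of_one_le_left hh hpow
    have h4 : 4 * (4 ^ m * h) ≤ D := by rw [pow_succ] at hhD; linarith
    have hsub : ∀ w ∈ Metric.ball (0 : ℂ) (D / 2), Metric.ball w (D / 2) ⊆ Metric.ball 0 D := by
      intro w hw
      apply Metric.ball_subset_ball'
      rw [Metric.mem_ball] at hw
      linarith
    have hin : ∀ w : ℂ, w + (h : ℂ) ∈ Metric.ball w (D / 2) := by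
      intro w
      simp only [Metric.mem_ball, dist_self_add_left, Complex.norm_real, Real.norm_eq_abs, abs_of_nonneg hh]
      linarith
    have hcen : ∀ w : ℂ, w ∈ Metric.ball w (D / 2) := fun w => Metric.mem_ball_self (by linarith)
    have key := ih (D / 2) (4 * (h / D) * M) h (fd (h : ℂ) F) (by linarith) hh (by linarith) ?_ ?_
    · rw [Function.iterate_succ_apply]
      refine key.trans (le_of_eq ?_)
      rw [show h / (D / 2) = 2 * (h / D) by field_simp, mul_pow, pow_succ]
      ring
    · have e1 : DifferentiableOn ℂ (fun w : ℂ => F (w + (h : ℂ))) (Metric.ball 0 (D / 2)) := by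
        refine hF.comp (by fun_prop) fun w hw => hsub w hw (hin w)
      exact e1.sub (hF.mono (Metric.ball_subset_ball (by linarith)))
    · intro w hw
      have := Complex.dist_le_div_mul_dist_of_mapsTo_ball (f := F) (c := w) (z := w + h) (R₁ := D / 2) (R₂ := 2 * M)
        (hF.mono (hsub w hw)) ?_ (hin w)
      · simp only [dist_self_add_left, Complex.norm_real, Real.norm_eq_abs, abs_of_nonneg hh] at this
        rw [dist_eq_norm] at this
        refine this.trans (le_of_eq ?_)
        field_simp
        ring
      · intro y hy
        rw [Metric.mem_closedBall, dist_eq_norm]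
        have h1 := hM y (hsub w hw hy)
        have h2 := hM w (hsub w hw (hcen w))
        exact (norm_sub_le _ _).trans (by linarith)

lemma mono_ext {l : ℕ} (g : EuclideanSpace ℝ (Fin l) → ℂ) (x : EuclideanSpace ℝ (Fin l))
    (hx : ‖x‖ ≤ 1) (i : Fin l) (D M : ℝ) (hD1 : D ≤ 1) (F : ℂ → ℂ)
    (hF : DifferentiableOn ℂ F (Metric.ball 0 D)) (hM : ∀ w ∈ Metric.ball (0 : ℂ) D, ‖F w‖ ≤ M)
    (hgF : ∀ t : ℝ, |t| < D → g (x + EuclideanSpace.single i t) = F t) (L : List (Fin l)) :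
    ∃ F : ℂ → ℂ, DifferentiableOn ℂ F (Metric.ball 0 D) ∧
      (∀ w ∈ Metric.ball (0 : ℂ) D, ‖F w‖ ≤ 2 ^ L.length * M) ∧
      (∀ t : ℝ, |t| < D → monoMul g L (x + EuclideanSpace.single i t) = F t) := by
  induction L with
  | nil => exact ⟨F, hF, by simpa using hM, hgF⟩
  | cons j L ih =>
    obtain ⟨F', h1, h2, h3⟩ := ih
    refine ⟨fun w => Complex.I * ((x j : ℂ) + if j = i then w else 0) * F' w, ?_, ?_, ?_⟩
    · refine DifferentiableOn.mul ?_ h1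
      split_ifs <;> fun_prop
    · intro w hw
      have hw1 : ‖w‖ ≤ 1 := by
        rw [Metric.mem_ball, dist_zero_right] at hw; linarith
      have hxj : ‖(x j : ℂ)‖ ≤ 1 := by
        rw [Complex.norm_real]; exact (PiLp.norm_apply_le x j).trans hx
      have : ‖(x j : ℂ) + if j = i then w else 0‖ ≤ 2 := by
        refine (norm_add_le _ _).trans ?_
        split_ifs
        · linarith
        · simp; simp at hxj; linarith
      rw [norm_mul, norm_mul, Complex.norm_I, one_mul, List.length_cons, pow_succ', mul_assoc]
      exact mul_le_mul this (h2 w hw) (norm_nonneg _) (by norm_num)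
    · intro t ht
      simp only [monoMul, h3 t ht]
      congr 2
      by_cases hji : j = i <;> simp [hji]

lemma norm_sq_add_single {l : ℕ} (x : EuclideanSpace ℝ (Fin l)) (i : Fin l) (t : ℝ) :
    ‖x + EuclideanSpace.single i t‖ ^ 2 = ‖x‖ ^ 2 + 2 * t * x i + t ^ 2 := by
  rw [norm_add_sq_real, EuclideanSpace.inner_single_right]
  simp
  ring

lemma sRz_ext {l : ℕ} (ρ₀ R r : ℝ) (hρ : 0 < ρ₀) (hr0 : 0 < r) (hR : R = ρ₀ ^ 2 + r ^ 2) (hr : r ≤ 1)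
    (z : ℂ) (hz : 0 ≤ z.re)
    (x : EuclideanSpace ℝ (Fin l)) (i : Fin l) (hx : ‖x‖ < r) :
    ∃ F : ℂ → ℂ, DifferentiableOn ℂ F (Metric.ball 0 ((r - ‖x‖) / 2)) ∧
      (∀ w ∈ Metric.ball (0 : ℂ) ((r - ‖x‖) / 2),
        ‖F w‖ ≤ Real.exp (π * |z.im|) * (3 / ρ₀ ^ 2) ^ z.re * (r - ‖x‖) ^ z.re) ∧
      (∀ t : ℝ, |t| < (r - ‖x‖) / 2 → sRz l ρ₀ R z (x + EuclideanSpace.single i t) = F t) := by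
  have hR0 : 0 < R := by rw [hR]; positivity
  set d := r - ‖x‖ with hd
  have hd0 : 0 < d := by linarith
  set A := r ^ 2 - ‖x‖ ^ 2 with hA
  have hnx := norm_nonneg x
  have hAd : A = d * (r + ‖x‖) := by rw [hA, hd]; ring
  have hxi : |x i| ≤ ‖x‖ := PiLp.norm_apply_le x i
  have hw : ∀ w : ℂ, ‖w‖ < d / 2 → ‖2 * w * (x i : ℂ) + w ^ 2‖ ≤ A / 2 := by
    intro w hw
    calc ‖2 * w * (x i : ℂ) + w ^ 2‖ ≤ ‖2 * w * (x i : ℂ)‖ + ‖w ^ 2‖ := norm_add_le _ _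
      _ = ‖w‖ * (2 * |x i| + ‖w‖) := by
        simp only [norm_mul, norm_pow, Complex.norm_real, Real.norm_eq_abs, Complex.norm_two]; ring
      _ ≤ (d / 2) * (2 * ‖x‖ + d / 2) := by gcongr
      _ ≤ A / 2 := by rw [hAd]; nlinarith
  have hA0 : 0 < A := by rw [hAd]; positivity
  have hre : ∀ w : ℂ, ‖w‖ < d / 2 →
      0 < (((A : ℂ) - (2 * w * (x i : ℂ) + w ^ 2)) / (R : ℂ)).re := by
    intro w h
    rw [Complex.div_ofReal_re, Complex.sub_re, Complex.ofReal_re]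
    have := (Complex.re_le_norm _).trans (hw w h)
    apply div_pos _ hR0
    linarith
  refine ⟨fun w => (((A : ℂ) - (2 * w * (x i : ℂ) + w ^ 2)) / (R : ℂ)) ^ z, ?_, ?_, ?_⟩
  · intro w h
    rw [Metric.mem_ball, dist_zero_right] at h
    apply DifferentiableAt.differentiableWithinAt
    refine DifferentiableAt.cpow_const (by fun_prop) ?_
    exact Or.inl (hre w h)
  · intro w h
    rw [Metric.mem_ball, dist_zero_right] at h
    refine (Complex.norm_cpow_le _ _).trans ?_
    rw [div_eq_mul_inv, ← Real.exp_neg]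
    have hn : ‖((A : ℂ) - (2 * w * (x i : ℂ) + w ^ 2)) / (R : ℂ)‖ ≤ 3 / ρ₀ ^ 2 * d := by
      rw [norm_div, Complex.norm_real, Real.norm_eq_abs, abs_of_pos hR0]
      have h1 : ‖(A : ℂ) - (2 * w * (x i : ℂ) + w ^ 2)‖ ≤ 3 * d := by
        refine (norm_sub_le _ _).trans ?_
        rw [Complex.norm_real, Real.norm_eq_abs, abs_of_pos hA0]
        have := hw w h
        have : A ≤ d * 2 := by rw [hAd]; gcongr; linarith
        linarith
      calc _ ≤ 3 * d / ρ₀ ^ 2 := by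
            apply div_le_div₀ (by positivity) h1 (by positivity)
            rw [hR]; nlinarith
        _ = _ := by ring
    calc _ ≤ (3 / ρ₀ ^ 2 * d) ^ z.re * Real.exp (π * |z.im|) := by
          gcongr
          refine (neg_le_abs _).trans ?_
          rw [abs_mul]
          gcongr
          exact Complex.abs_arg_le_pi _
      _ = _ := by rw [Real.mul_rpow (by positivity) hd0.le]; ring
  · intro t ht
    have e : 1 - (ρ₀ ^ 2 + ‖x + EuclideanSpace.single i t‖ ^ 2) / R = (A - (2 * t * x i + t ^ 2)) / R := by
      rw [norm_sq_add_single, hA]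
      field_simp
      rw [hR]; ring
    have h1 := hre t (by simpa using ht)
    have e2 : (((A : ℂ) - (2 * (t : ℂ) * (x i : ℂ) + (t : ℂ) ^ 2)) / (R : ℂ)) =
      ((1 - (ρ₀ ^ 2 + ‖x + EuclideanSpace.single i t‖ ^ 2) / R : ℝ) : ℂ) := by
      rw [e]; push_cast; ring
    simp only
    rw [e2] at h1 ⊢
    rw [Complex.ofReal_re] at h1
    unfold sRz
    rw [if_pos h1]

lemma sRz_zero {l : ℕ} (ρ₀ R r : ℝ) (hρ : 0 < ρ₀) (hr0 : 0 < r) (hR : R = ρ₀ ^ 2 + r ^ 2)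
    (z : ℂ) (x : EuclideanSpace ℝ (Fin l)) (hx : r ≤ ‖x‖) : sRz l ρ₀ R z x = 0 := by
  have hR0 : 0 < R := by rw [hR]; positivity
  unfold sRz
  rw [if_neg]
  rw [not_lt, sub_nonpos, le_div_iff₀ hR0, hR]
  nlinarith

lemma monoMul_zero {l : ℕ} (g : EuclideanSpace ℝ (Fin l) → ℂ) (x : EuclideanSpace ℝ (Fin l))
    (h : g x = 0) (L : List (Fin l)) : monoMul g L x = 0 := by
  induction L with
  | nil => exact h
  | cons i L ih => simp [monoMul, ih]

lemma sRz_nice {l : ℕ} (ρ₀ R r : ℝ) (hρ : 0 < ρ₀) (hr0 : 0 < r) (hR : R = ρ₀ ^ 2 + r ^ 2)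
    (z : ℂ) (hz : 0 ≤ z.re) : Nice (sRz l ρ₀ R z) := by
  have hR0 : 0 < R := by rw [hR]; positivity
  refine ⟨?_, ⟨1, fun x => ?_⟩, r, fun x hx => sRz_zero ρ₀ R r hρ hr0 hR z x hx.le⟩
  · unfold sRz
    refine Measurable.ite (measurableSet_lt (by fun_prop) (by fun_prop)) ?_ (by fun_prop)
    fun_prop
  · unfold sRz
    split_ifs with h
    · rw [Complex.norm_cpow_eq_rpow_re_of_pos h]
      apply Real.rpow_le_one h.le _ hz
      have : 0 ≤ (ρ₀ ^ 2 + ‖x‖ ^ 2) / R := by positivity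
      linarith
    · simp

/-- Pointwise bound for differences. -/
lemma fd_bound {l : ℕ} (ρ₀ : ℝ) (hρ : 0 < ρ₀) (z : ℂ) (hz : 0 ≤ z.re) (i : Fin l)
    (L : List (Fin l)) (m : ℕ) (hm : z.re + 1 ≤ m) :
    ∃ C : ℝ, 0 < C ∧ ∀ (R r h : ℝ), 0 < r → R = ρ₀ ^ 2 + r ^ 2 → r ≤ 1 → 0 < h →
      ∀ x, ‖(fd (EuclideanSpace.single i h))^[m] (monoMul (sRz l ρ₀ R z) L) x‖ ≤
        C * h ^ z.re * (h / (h + |r - ‖x‖|)) := by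
  obtain ⟨C₁, hC₁, hfd⟩ := fd_holo m
  set B : ℝ := 2 ^ L.length * (Real.exp (π * |z.im|) * (3 / ρ₀ ^ 2) ^ z.re) with hB
  have hB0 : 0 < B := by positivity
  set K : ℝ := 2 * (4 ^ m + m) with hK
  have hK0 : 0 < K := by positivity
  refine ⟨2 ^ m * B * (K + m) ^ z.re * (1 + K) + 2 * (C₁ * 2 ^ m * B), by positivity,
    fun R r h hr0 hR hr hh x => ?_⟩
  set g := monoMul (sRz l ρ₀ R z) L with hg
  have hext : ∀ y : EuclideanSpace ℝ (Fin l), ‖y‖ < r →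
      ∃ F : ℂ → ℂ, DifferentiableOn ℂ F (Metric.ball 0 ((r - ‖y‖) / 2)) ∧
      (∀ w ∈ Metric.ball (0 : ℂ) ((r - ‖y‖) / 2), ‖F w‖ ≤ B * (r - ‖y‖) ^ z.re) ∧
      (∀ t : ℝ, |t| < (r - ‖y‖) / 2 → g (y + EuclideanSpace.single i t) = F t) := by
    intro y hy
    obtain ⟨F, h1, h2, h3⟩ := sRz_ext ρ₀ R r hρ hr0 hR hr z hz y i hy
    obtain ⟨F', h1', h2', h3'⟩ := mono_ext (sRz l ρ₀ R z) y (by linarith) i _ _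
      (by linarith [norm_nonneg y]) F h1 h2 h3 L
    refine ⟨F', h1', fun w hw => (h2' w hw).trans (le_of_eq ?_), h3'⟩
    rw [hB]; ring
  have hg0 : ∀ y : EuclideanSpace ℝ (Fin l), r ≤ ‖y‖ → g y = 0 := fun y hy =>
    monoMul_zero _ _ (sRz_zero ρ₀ R r hρ hr0 hR z y hy) L
  have hg1 : ∀ y : EuclideanSpace ℝ (Fin l), ‖y‖ < r → ‖g y‖ ≤ B * (r - ‖y‖) ^ z.re := by
    intro y hy
    obtain ⟨F, h1, h2, h3⟩ := hext y hy
    have := h3 0 (by simp; linarith)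
    have hz0 : (EuclideanSpace.single i (0 : ℝ) : EuclideanSpace ℝ (Fin l)) = 0 := by
      ext k; simp
    rw [hz0, add_zero] at this
    rw [this]
    apply h2
    simp; linarith
  have hsmul : ∀ j : ℕ, j • (EuclideanSpace.single i h : EuclideanSpace ℝ (Fin l)) = EuclideanSpace.single i (j * h) := by
    intro j
    ext k
    by_cases hk : k = i <;> simp [hk]
  have hns : ∀ j : ℕ, j ≤ m → ‖(j • EuclideanSpace.single i h : EuclideanSpace ℝ (Fin l))‖ ≤ m * h := by
    intro j hj
    rw [hsmul, show ‖(EuclideanSpace.single i ((j : ℝ) * h) : EuclideanSpace ℝ (Fin l))‖ = ‖(j : ℝ) * h‖ from PiLp.norm_single 2 (fun _ => ℝ) i _, Real.norm_eq_abs, abs_of_nonneg (by positivity)]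
    gcongr
  have hlow : ∀ j : ℕ, j ≤ m → ‖x‖ - m * h ≤ ‖x + j • EuclideanSpace.single i h‖ := by
    intro j hj
    have := norm_sub_le (x + j • EuclideanSpace.single i h) (j • EuclideanSpace.single i h)
    rw [add_sub_cancel_right] at this
    linarith [hns j hj]
  set d := r - ‖x‖ with hd
  have hpos1 : 0 ≤ 2 ^ m * B * (K + m) ^ z.re * (1 + K) := by positivity
  have hpos2 : 0 ≤ 2 * (C₁ * 2 ^ m * B) := by positivity
  rw [add_mul, add_mul]
  rcases le_or_gt |d| (K * h) with hc | hc
  · have hcr := fd_crude (EuclideanSpace.single i h) m (B * ((K + m) * h) ^ z.re) g x ?_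
    · have : 1 ≤ (1 + K) * (h / (h + |d|)) := by
        rw [← mul_div_assoc, one_le_div (by positivity)]
        linarith
      have h3 : 2 ^ m * (B * ((K + m) * h) ^ z.re) ≤ 2 ^ m * (B * ((K + m) * h) ^ z.re) * ((1 + K) * (h / (h + |d|))) :=
        le_mul_of_one_le_right (by positivity) this
      refine hcr.trans (h3.trans ?_)
      rw [Real.mul_rpow (by positivity) hh.le]
      have : 0 ≤ 2 * (C₁ * 2 ^ m * B) * h ^ z.re * (h / (h + |d|)) := by positivity
      refine le_trans (le_of_eq ?_) (le_add_of_nonneg_right this)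
      ring
    · intro j hj
      rcases le_or_gt r ‖x + j • EuclideanSpace.single i h‖ with hy | hy
      · rw [hg0 _ hy, norm_zero]; positivity
      · refine (hg1 _ hy).trans ?_
        have := hlow j hj
        have := le_abs_self d
        gcongr
        linarith
  · rcases le_or_gt d 0 with hd0 | hd0
    · have : (fd (EuclideanSpace.single i h))^[m] g x = 0 := by
        rw [← norm_le_zero_iff]
        have := fd_crude (EuclideanSpace.single i h) m 0 g x ?_
        · simpa using this
        · intro j hj
          rw [hg0, norm_zero]
          have := hlow j hj
          rw [abs_of_nonpos hd0] at hc
          have : (m : ℝ) * h ≤ K * h := by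
            gcongr
            rw [hK]
            have : (0 : ℝ) < 4 ^ m := by positivity
            linarith [Nat.cast_nonneg (α := ℝ) m]
          linarith
      rw [this, norm_zero]
      positivity
    · rw [abs_of_pos hd0] at hc ⊢
      obtain ⟨F, h1, h2, h3⟩ := hext x (by linarith)
      have hmK : (4 : ℝ) ^ m * h < d / 2 ∧ m * h < d / 2 := by
        have e1 : 2 * (4 ^ m * h) + 2 * (m * h) < d := by rw [hK] at hc; linarith
        have e2 : 0 < (4 : ℝ) ^ m * h := by positivity
        have e3 : 0 ≤ m * h := by positivity
        constructor <;> linarith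
      have hcongr : (fd (EuclideanSpace.single i h))^[m] g x = (fd (h : ℂ))^[m] F 0 := by
        apply fd_congr
        intro j hj
        have : (j : ℝ) * h ≤ m * h := by gcongr
        rw [hsmul, h3 _ (by rw [abs_of_nonneg (by positivity)]; linarith)]
        simp
      rw [hcongr]
      have key := hfd (d / 2) _ h F (by linarith) hh.le hmK.1.le h1 h2
      refine key.trans ?_
      have hhd : h ≤ d := by
        have : (1 : ℝ) ≤ 4 ^ m := one_le_pow₀ (by norm_num)
        nlinarith [hmK.1]
      have e1 : (h / (d / 2)) ^ m * d ^ z.re ≤ 2 ^ m * h ^ z.re * (h / d) := by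
        rw [show h / (d / 2) = 2 * (h / d) by field_simp, mul_pow, mul_assoc, mul_assoc]
        refine mul_le_mul_of_nonneg_left ?_ (by positivity)
        have e2 : d ^ z.re = h ^ z.re * (h / d) ^ (-z.re) := by
          rw [Real.div_rpow hh.le hd0.le, Real.rpow_neg hh.le, Real.rpow_neg hd0.le]
          have := Real.rpow_pos_of_pos hh z.re
          field_simp
        rw [e2, mul_left_comm, ← Real.rpow_natCast, ← Real.rpow_add (by positivity)]
        refine mul_le_mul_of_nonneg_left ?_ (by positivity)
        calc (h / d) ^ ((m : ℝ) + -z.re) ≤ (h / d) ^ (1 : ℝ) := by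
              apply Real.rpow_le_rpow_of_exponent_ge (by positivity)
              · rw [div_le_one hd0]; exact hhd
              · linarith
          _ = h / d := Real.rpow_one _
      have e3 : h / d ≤ 2 * (h / (h + d)) := by
        rw [← mul_div_assoc, div_le_div_iff₀ hd0 (by positivity)]
        nlinarith
      refine le_trans ?_ (le_add_of_nonneg_left (by positivity))
      calc C₁ * (h / (d / 2)) ^ m * (B * d ^ z.re) = C₁ * B * ((h / (d / 2)) ^ m * d ^ z.re) := by ring
        _ ≤ C₁ * B * (2 ^ m * h ^ z.re * (2 * (h / (h + d)))) := by
          refine mul_le_mul_of_nonneg_left (e1.trans ?_) (by positivity)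
          exact mul_le_mul_of_nonneg_left e3 (by positivity)
        _ = _ := by ring

lemma fd_zero {l : ℕ} (g : EuclideanSpace ℝ (Fin l) → ℂ) (v : EuclideanSpace ℝ (Fin l)) (m : ℕ)
    (r : ℝ) (hg : ∀ x, r ≤ ‖x‖ → g x = 0) (x : EuclideanSpace ℝ (Fin l))
    (hx : r + m * ‖v‖ ≤ ‖x‖) : (fd v)^[m] g x = 0 := by
  rw [← norm_le_zero_iff]
  have := fd_crude v m 0 g x ?_
  · simpa using this
  · intro j hj
    rw [hg, norm_zero]
    have h1 := norm_sub_le (x + j • v) (j • v)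
    rw [add_sub_cancel_right] at h1
    have h2 : ‖j • v‖ ≤ m * ‖v‖ := by
      refine (norm_nsmul_le).trans ?_
      gcongr
    linarith

lemma polar_bound (l : ℕ) (hl : 1 ≤ l) (K : ℝ) (hK : 0 < K) : ∃ C : ℝ, 0 < C ∧ ∀ (r h : ℝ), 0 < h →
    ∫⁻ x : EuclideanSpace ℝ (Fin l), ENNReal.ofReal
      ((Set.Iic K).indicator (fun y => (1 + ((y - r) / h) ^ 2)⁻¹) ‖x‖) ≤ ENNReal.ofReal (C * h) := by
  set V : ℝ := (volume : Measure (EuclideanSpace ℝ (Fin l))).real (Metric.ball 0 1) with hV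
  have hV0 : 0 ≤ V := measureReal_nonneg
  refine ⟨l * (V * (K ^ (l - 1) * π)) + 1, by positivity, fun r h hh => ?_⟩
  set φ : ℝ → ℝ := fun y => (1 + ((y - r) / h) ^ 2)⁻¹ with hφ
  have hφ0 : ∀ y, 0 ≤ φ y := fun y => by simp only [hφ]; positivity
  have hφi : Integrable φ := by
    have h1 := (integrable_inv_one_add_sq.comp_div hh.ne').comp_sub_right r
    exact h1
  have hφint : ∫ y, φ y = h * π := by
    have h1 : ∫ y, φ y = ∫ y, (fun y => (1 + (y / h) ^ 2)⁻¹) (y - r) := rfl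
    rw [h1, integral_sub_right_eq_self (fun y : ℝ => (1 + (y / h) ^ 2)⁻¹) r,
      Measure.integral_comp_div (fun y : ℝ => (1 + y ^ 2)⁻¹) h, integral_univ_inv_one_add_sq,
      abs_of_pos hh, smul_eq_mul]
  set f : ℝ → ℝ := (Set.Iic K).indicator φ with hf
  have hf0 : ∀ y, 0 ≤ f y := fun y => Set.indicator_nonneg (fun y _ => hφ0 y) y
  have hle : ∀ y ∈ Set.Ioi (0 : ℝ), y ^ (l - 1) * f y ≤ K ^ (l - 1) * φ y := by
    intro y hy
    have hy0 : (0 : ℝ) < y := hy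
    by_cases hyK : y ∈ Set.Iic K
    · rw [hf, Set.indicator_of_mem hyK]
      have : y ≤ K := hyK
      have := hφ0 y
      gcongr
    · rw [hf, Set.indicator_of_notMem hyK, mul_zero]
      have := hφ0 y
      positivity
  have hfm : Measurable f := by
    refine Measurable.indicator ?_ measurableSet_Iic
    simp only [hφ]; fun_prop
  have hi1 : IntegrableOn (fun y => y ^ (l - 1) * f y) (Set.Ioi 0) := by
    refine ((hφi.const_mul (K ^ (l - 1))).integrableOn).mono' (by fun_prop) ?_
    refine (ae_restrict_iff' measurableSet_Ioi).2 (Filter.Eventually.of_forall fun y hy => ?_)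
    rw [Real.norm_eq_abs, abs_of_nonneg]
    · exact hle y hy
    · have hy0 : (0 : ℝ) < y := hy
      have := hf0 y
      positivity
  have : Nonempty (Fin l) := ⟨⟨0, hl⟩⟩
  have hi2 : Integrable (fun x : EuclideanSpace ℝ (Fin l) => f ‖x‖) := by
    rw [integrable_fun_norm_addHaar volume, finrank_euclideanSpace_fin]
    exact hi1
  rw [← ofReal_integral_eq_lintegral_ofReal hi2 (Filter.Eventually.of_forall fun x => hf0 _)]
  apply ENNReal.ofReal_le_ofReal
  rw [integral_fun_norm_addHaar volume f, finrank_euclideanSpace_fin]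
  simp only [smul_eq_mul, nsmul_eq_mul]
  have h3 : ∫ y in Set.Ioi 0, y ^ (l - 1) * f y ≤ K ^ (l - 1) * (h * π) := by
    calc _ ≤ ∫ y in Set.Ioi 0, K ^ (l - 1) * φ y :=
          setIntegral_mono_on hi1 (hφi.const_mul _).integrableOn measurableSet_Ioi hle
      _ ≤ ∫ y, K ^ (l - 1) * φ y := by
          refine setIntegral_le_integral (hφi.const_mul _) (Filter.Eventually.of_forall fun y => ?_)
          have := hφ0 y
          positivity
      _ = _ := by rw [integral_const_mul, hφint]
  calc _ ≤ l * (V * (K ^ (l - 1) * (h * π))) := by gcongr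
    _ ≤ _ := by nlinarith

lemma fd_L2 {l : ℕ} (hl : 1 ≤ l) (ρ₀ : ℝ) (hρ : 0 < ρ₀) (z : ℂ) (hz : 0 ≤ z.re) (i : Fin l)
    (L : List (Fin l)) (m : ℕ) (hm : z.re + 1 ≤ m) (H₀ : ℝ) (hH₀ : 0 < H₀) :
    ∃ C : ℝ, 0 < C ∧ ∀ (R r h : ℝ), 0 < r → R = ρ₀ ^ 2 + r ^ 2 → r ≤ 1 → 0 < h → h ≤ H₀ →
      ∫⁻ x, ‖(fd (EuclideanSpace.single i h))^[m] (monoMul (sRz l ρ₀ R z) L) x‖ₑ ^ 2 ≤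
        ENNReal.ofReal (C * h ^ (2 * z.re + 1)) := by
  obtain ⟨C₁, hC₁, hb⟩ := fd_bound ρ₀ hρ z hz i L m hm
  obtain ⟨C₂, hC₂, hp⟩ := polar_bound l hl (1 + m * H₀) (by positivity)
  refine ⟨C₁ ^ 2 * C₂, by positivity, fun R r h hr0 hR hr hh hhH => ?_⟩
  have hpt : ∀ x, ‖(fd (EuclideanSpace.single i h))^[m] (monoMul (sRz l ρ₀ R z) L) x‖ₑ ^ 2 ≤
      ENNReal.ofReal ((C₁ * h ^ z.re) ^ 2) * ENNReal.ofReal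
      ((Set.Iic (1 + m * H₀)).indicator (fun y => (1 + ((y - r) / h) ^ 2)⁻¹) ‖x‖) := by
    intro x
    by_cases hx : ‖x‖ ∈ Set.Iic (1 + m * H₀)
    · rw [Set.indicator_of_mem hx, ← ENNReal.ofReal_mul (by positivity), ← ofReal_norm,
        ← ENNReal.ofReal_pow (norm_nonneg _)]
      apply ENNReal.ofReal_le_ofReal
      calc _ ≤ (C₁ * h ^ z.re * (h / (h + |r - ‖x‖|))) ^ 2 := by
            gcongr
            exact hb R r h hr0 hR hr hh x
        _ = (C₁ * h ^ z.re) ^ 2 * (h / (h + |r - ‖x‖|)) ^ 2 := by ring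
        _ ≤ _ := by
          gcongr
          rw [div_pow, inv_eq_one_div, div_le_div_iff₀ (by positivity) (by positivity), div_pow]
          have e : h ^ 2 * (1 + (‖x‖ - r) ^ 2 / h ^ 2) = h ^ 2 + (‖x‖ - r) ^ 2 := by field_simp
          rw [e]
          have : |r - ‖x‖| ^ 2 = (r - ‖x‖) ^ 2 := sq_abs _
          nlinarith [abs_nonneg (r - ‖x‖)]
    · rw [fd_zero _ _ m r (fun y hy => monoMul_zero _ _ (sRz_zero ρ₀ R r hρ hr0 hR z y hy) L)]
      · simp
      · rw [show ‖(EuclideanSpace.single i h : EuclideanSpace ℝ (Fin l))‖ = ‖h‖ from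
          PiLp.norm_single 2 (fun _ => ℝ) i _, Real.norm_eq_abs, abs_of_pos hh]
        have : 1 + m * H₀ < ‖x‖ := by simpa using hx
        have : m * h ≤ m * H₀ := by gcongr
        linarith
  refine (lintegral_mono hpt).trans ?_
  rw [lintegral_const_mul' _ _ ENNReal.ofReal_ne_top]
  refine (mul_le_mul_right (hp r h hh) _).trans ?_
  rw [← ENNReal.ofReal_mul (by positivity)]
  apply le_of_eq
  congr 1
  rw [Real.rpow_add hh, Real.rpow_one, two_mul, Real.rpow_add hh]
  ring

lemma exp_lower (θ : ℝ) (h1 : 1 ≤ |θ|) (h2 : |θ| ≤ 2) :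
    1 / 2 ≤ ‖Complex.exp (-Complex.I * (θ : ℂ)) - 1‖ := by
  have e : -Complex.I * (θ : ℂ) = Complex.I * ((-θ : ℝ) : ℂ) := by push_cast; ring
  rw [e, Complex.norm_exp_I_mul_ofReal_sub_one, Real.norm_eq_abs, abs_mul, abs_two]
  have h3 : |Real.sin (-θ / 2)| = |Real.sin (|θ| / 2)| := by
    rcases abs_cases θ with ⟨h, _⟩ | ⟨h, _⟩ <;> rw [h]
    rw [neg_div, Real.sin_neg, abs_neg]
  rw [h3]
  have hpi := Real.pi_gt_three
  have hpi4 := Real.pi_le_four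
  have := Real.mul_le_sin (x := |θ| / 2) (by positivity) (by linarith)
  have h5 : 1 / 2 * (1 / 2) ≤ 2 / π * (|θ| / 2) := by
    have : 1 / 2 ≤ 2 / π := by rw [div_le_div_iff₀ (by norm_num) (by linarith)]; linarith
    gcongr
  linarith [le_abs_self (Real.sin (|θ| / 2))]

lemma tail_one {l : ℕ} (hl : 1 ≤ l) (ρ₀ : ℝ) (hρ : 0 < ρ₀) (z : ℂ) (hz : 0 ≤ z.re)
    (L : List (Fin l)) :
    ∃ C : ℝ, 0 < C ∧ ∀ (R r a : ℝ), 0 < r → R = ρ₀ ^ 2 + r ^ 2 → r ≤ 1 → 1 / 2 ≤ a →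
      ∫⁻ H in {H : EuclideanSpace ℝ (Fin l) | a < ‖H‖},
        ‖invFT l (monoMul (sRz l ρ₀ R z) L) H‖ₑ ^ 2 ≤
        ENNReal.ofReal (C * a ^ (-(2 * z.re + 1))) := by
  set m := ⌈z.re⌉₊ + 1 with hmdef
  have hm : z.re + 1 ≤ m := by
    rw [hmdef]; push_cast; linarith [Nat.le_ceil z.re]
  obtain ⟨Cp, hCp⟩ := plancherel_invFT l
  have hl0 : (0 : ℝ) < l := by exact_mod_cast hl
  choose C hC0 hC using fun i => fd_L2 hl ρ₀ hρ z hz i L m hm (2 * l) (by positivity)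
  set s := 2 * z.re + 1 with hs
  have hs1 : 1 ≤ s := by linarith
  set X : Fin l → ℝ := fun i => 4 ^ m * Cp * C i * l ^ s with hX
  have hX0 : ∀ i, 0 ≤ X i := fun i => by have := hC0 i; simp only [hX]; positivity
  refine ⟨∑ i, X i * 2 + 1, by have := Finset.sum_nonneg (fun i (_ : i ∈ Finset.univ) => hX0 i); rw [← Finset.sum_mul]; positivity, fun R r a hr0 hR hr ha => ?_⟩
  have ha0 : 0 < a := by linarith
  set g := monoMul (sRz l ρ₀ R z) L with hg
  have hgn : Nice g := (sRz_nice ρ₀ R r hρ hr0 hR z hz).monoMul L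
  set b := a / l with hb
  have hb0 : 0 < b := by positivity
  set A : Fin l → ℕ → Set (EuclideanSpace ℝ (Fin l)) := fun i j =>
    {H | b * 2 ^ j ≤ |H i| ∧ |H i| ≤ b * 2 ^ (j + 1)} with hA
  have hAm : ∀ i j, MeasurableSet (A i j) := fun i j => by
    have hc : Continuous fun H : EuclideanSpace ℝ (Fin l) => |H i| := by fun_prop
    exact ((isClosed_le continuous_const hc).inter (isClosed_le hc continuous_const)).measurableSet
  have hcov : {H : EuclideanSpace ℝ (Fin l) | a < ‖H‖} ⊆ ⋃ i, ⋃ j, A i j := by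
    intro H hH
    have hH' : a < ‖H‖ := hH
    have : ∃ i, b ≤ |H i| := by
      by_contra! hcon
      have h1 : ‖H‖ ^ 2 ≤ a ^ 2 := by
        rw [EuclideanSpace.norm_sq_eq]
        calc ∑ i, ‖H i‖ ^ 2 ≤ ∑ i : Fin l, b ^ 2 := by
              gcongr with i
              exact (hcon i).le
          _ = l * b ^ 2 := by simp
          _ = a ^ 2 / l := by rw [hb]; field_simp
          _ ≤ a ^ 2 := by
            apply div_le_self (by positivity)
            exact_mod_cast hl
      nlinarith
    obtain ⟨i, hi⟩ := this
    obtain ⟨j, hj1, hj2⟩ := exists_nat_pow_near (x := |H i| / b) (y := 2) (by rwa [one_le_div hb0]) (by norm_num)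
    rw [le_div_iff₀ hb0] at hj1
    rw [div_lt_iff₀ hb0] at hj2
    refine Set.mem_iUnion.2 ⟨i, Set.mem_iUnion.2 ⟨j, ?_, ?_⟩⟩ <;> linarith
  have hpiece : ∀ i j, ∫⁻ H in A i j, ‖invFT l g H‖ₑ ^ 2 ≤
      ENNReal.ofReal (X i * a ^ (-s) * (1 / 2) ^ j) := by
    intro i j
    set h : ℝ := (b * 2 ^ j)⁻¹ with hh
    have hh0 : 0 < h := by positivity
    have h2j : (1 : ℝ) ≤ 2 ^ j := one_le_pow₀ (by norm_num)
    have hhH : h ≤ 2 * l := by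
      rw [hh]
      apply inv_le_of_inv_le₀ (by positivity)
      have : (2 * l : ℝ)⁻¹ ≤ b := by
        rw [hb, mul_inv, div_eq_mul_inv]
        gcongr
        linarith
      nlinarith
    have hpt : ∀ H ∈ A i j, ‖invFT l g H‖ₑ ^ 2 ≤
        ENNReal.ofReal (4 ^ m) * ‖invFT l ((fd (EuclideanSpace.single i h))^[m] g) H‖ₑ ^ 2 := by
      intro H hH
      obtain ⟨hH1, hH2⟩ := hH
      rw [invFT_fd hgn, ← ofReal_norm, ← ofReal_norm, ← ENNReal.ofReal_pow (norm_nonneg _),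
        ← ENNReal.ofReal_pow (norm_nonneg _), ← ENNReal.ofReal_mul (by positivity)]
      apply ENNReal.ofReal_le_ofReal
      have hin : inner ℝ (EuclideanSpace.single i h) H = h * H i := by
        rw [EuclideanSpace.inner_single_left]; simp
      rw [hin, norm_mul, norm_pow]
      have hab : |h * H i| = |H i| / (b * 2 ^ j) := by
        rw [abs_mul, abs_of_pos hh0, hh]; ring
      have hel := exp_lower (h * H i) (by rw [hab, one_le_div (by positivity)]; exact hH1)
        (by rw [hab, div_le_iff₀ (by positivity)]; rw [pow_succ] at hH2; linarith)
      set q := ‖Complex.exp (-Complex.I * ((h * H i : ℝ) : ℂ)) - 1‖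
      have h4 : 1 ≤ 4 ^ m * (q ^ m) ^ 2 := by
        rw [← pow_mul, mul_comm m 2, pow_mul, ← mul_pow]
        apply one_le_pow₀
        nlinarith
      rw [mul_pow, ← mul_assoc]
      exact le_mul_of_one_le_left (by positivity) h4
    calc ∫⁻ H in A i j, ‖invFT l g H‖ₑ ^ 2
        ≤ ∫⁻ H in A i j, ENNReal.ofReal (4 ^ m) * ‖invFT l ((fd (EuclideanSpace.single i h))^[m] g) H‖ₑ ^ 2 :=
          setLIntegral_mono' (hAm i j) hpt
      _ ≤ ∫⁻ H, ENNReal.ofReal (4 ^ m) * ‖invFT l ((fd (EuclideanSpace.single i h))^[m] g) H‖ₑ ^ 2 :=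
          setLIntegral_le_lintegral _ _
      _ = ENNReal.ofReal (4 ^ m) * (Cp * ∫⁻ x, ‖(fd (EuclideanSpace.single i h))^[m] g x‖ₑ ^ 2) := by
          rw [lintegral_const_mul' _ _ ENNReal.ofReal_ne_top, hCp _ (hgn.fd _ m)]
      _ ≤ ENNReal.ofReal (4 ^ m) * (Cp * ENNReal.ofReal (C i * h ^ s)) := by
          gcongr
          exact hC i R r h hr0 hR hr hh0 hhH
      _ = ENNReal.ofReal (4 ^ m * (Cp * (C i * h ^ s))) := by
          have := hC0 i
          rw [ENNReal.ofReal_mul (p := (4 : ℝ) ^ m) (by positivity), ENNReal.ofReal_mul (p := (Cp : ℝ)) (by positivity), ENNReal.ofReal_coe_nnreal]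
      _ ≤ _ := by
          apply ENNReal.ofReal_le_ofReal
          have hhs : h ^ s ≤ l ^ s * a ^ (-s) * (1 / 2) ^ j := by
            have e : h = l * a⁻¹ * (1 / 2) ^ j := by
              rw [hh, hb, one_div, inv_pow]; field_simp
            rw [e, Real.mul_rpow (by positivity) (by positivity), Real.mul_rpow (by positivity) (by positivity),
              Real.inv_rpow ha0.le, Real.rpow_neg ha0.le]
            gcongr
            calc (((1 : ℝ) / 2) ^ j) ^ s ≤ (((1 : ℝ) / 2) ^ j) ^ (1 : ℝ) := by
                  apply Real.rpow_le_rpow_of_exponent_ge (by positivity) _ hs1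
                  exact pow_le_one₀ (by norm_num) (by norm_num)
              _ = _ := Real.rpow_one _
          have := hC0 i
          calc 4 ^ m * (Cp * (C i * h ^ s)) ≤ 4 ^ m * (Cp * (C i * (l ^ s * a ^ (-s) * (1 / 2) ^ j))) := by gcongr
            _ = _ := by simp only [hX]; ring
  calc _ ≤ ∫⁻ H in ⋃ i, ⋃ j, A i j, ‖invFT l g H‖ₑ ^ 2 := lintegral_mono_set hcov
    _ ≤ ∑' i, ∫⁻ H in ⋃ j, A i j, ‖invFT l g H‖ₑ ^ 2 := lintegral_iUnion_le _ _
    _ ≤ ∑' i, ∑' j, ∫⁻ H in A i j, ‖invFT l g H‖ₑ ^ 2 :=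
        ENNReal.tsum_le_tsum fun i => lintegral_iUnion_le _ _
    _ ≤ ∑' i, ∑' j : ℕ, ENNReal.ofReal (X i * a ^ (-s) * (1 / 2) ^ j) :=
        ENNReal.tsum_le_tsum fun i => ENNReal.tsum_le_tsum fun j => hpiece i j
    _ = ∑ i, ENNReal.ofReal (X i * a ^ (-s) * 2) := by
        rw [tsum_fintype]
        congr 1
        ext i
        have := hX0 i
        rw [← ENNReal.ofReal_tsum_of_nonneg (fun j => by positivity) (summable_geometric_two.mul_left _),
          tsum_mul_left, tsum_geometric_two]
    _ = ENNReal.ofReal (∑ i, X i * a ^ (-s) * 2) := by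
        rw [ENNReal.ofReal_sum_of_nonneg]
        intro i _
        have := hX0 i
        positivity
    _ ≤ _ := by
        apply ENNReal.ofReal_le_ofReal
        have e : ∑ i, X i * a ^ (-s) * 2 = (∑ i, X i * 2) * a ^ (-s) := by
          rw [Finset.sum_mul]; congr 1; ext i; ring
        rw [e, add_mul]
        have : 0 ≤ 1 * a ^ (-s) := by positivity
        linarith

/-- L² tail estimate for sums of multi-index derivatives of ℱ^{−1}s_R^z, uniformly for
ρ₀² < R ≤ ρ₀² + 1 and a ≥ 1/2:
(∫_{‖H‖>a} (Σ_{|α|≤2k} |∂^α(ℱ^{−1}s_R^z)(H)|)² dH)^{1/2} ≤ c a^{−Re z − 1/2}. -/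
theorem invFT_sRz_L2_tail_smallR (l k : ℕ) (hl : 1 ≤ l) (ρ₀ : ℝ) (hρ : 0 < ρ₀)
    (z : ℂ) (hz : 0 ≤ z.re) :
    ∃ c : ℝ, 0 < c ∧ ∀ R : ℝ, ρ₀ ^ 2 < R → R ≤ ρ₀ ^ 2 + 1 → ∀ a : ℝ, 1 / 2 ≤ a →
      Real.sqrt (∫ H in {H : EuclideanSpace ℝ (Fin l) | a < ‖H‖},
          (∑ α ∈ Finset.univ.filter
              (fun α : Fin l → Fin (2 * k + 1) => (∑ i, (α i : ℕ)) ≤ 2 * k),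
            ‖partialD (fun i => (α i : ℕ)) (invFT l (sRz l ρ₀ R z)) H‖) ^ 2) ≤
        c * a ^ (-z.re - 1 / 2) := by
  set S := Finset.univ.filter
    (fun α : Fin l → Fin (2 * k + 1) => (∑ i, (α i : ℕ)) ≤ 2 * k) with hS
  choose C hC0 hC using fun α : Fin l → Fin (2 * k + 1) => tail_one hl ρ₀ hρ z hz
    ((List.finRange l).flatMap fun i => List.replicate (α i : ℕ) i)
  set D : ℝ := S.card * ∑ α ∈ S, C α with hD
  have hsumC : 0 ≤ ∑ α ∈ S, C α := Finset.sum_nonneg fun α _ => (hC0 α).le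
  have hD0 : 0 ≤ D := mul_nonneg (Nat.cast_nonneg _) hsumC
  refine ⟨Real.sqrt D + 1, by positivity, fun R hR1 hR2 a ha => ?_⟩
  have ha0 : 0 < a := by linarith
  set r := Real.sqrt (R - ρ₀ ^ 2) with hr
  have hr0 : 0 < r := Real.sqrt_pos.2 (by linarith)
  have hRr : R = ρ₀ ^ 2 + r ^ 2 := by rw [hr, Real.sq_sqrt (by linarith)]; ring
  have hr1 : r ≤ 1 := by nlinarith
  set T := {H : EuclideanSpace ℝ (Fin l) | a < ‖H‖}
  set s := 2 * z.re + 1 with hs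
  have hn := sRz_nice (l := l) ρ₀ R r hρ hr0 hRr z hz
  have hpd : ∀ α : Fin l → Fin (2 * k + 1), partialD (fun i => (α i : ℕ)) (invFT l (sRz l ρ₀ R z)) =
      invFT l (monoMul (sRz l ρ₀ R z) ((List.finRange l).flatMap fun i => List.replicate (α i : ℕ) i)) :=
    fun α => mderiv_invFT hn _
  set G : (Fin l → Fin (2 * k + 1)) → EuclideanSpace ℝ (Fin l) → ℂ :=
    fun α => partialD (fun i => (α i : ℕ)) (invFT l (sRz l ρ₀ R z)) with hG
  have hGc : ∀ α, Continuous (G α) := fun α => by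
    simp only [hG, hpd]; exact (hn.monoMul _).continuous
  have hGt : ∀ α, ∫⁻ H in T, ‖G α H‖ₑ ^ 2 ≤ ENNReal.ofReal (C α * a ^ (-s)) := fun α => by
    simp only [hG, hpd]; exact hC α R r a hr0 hRr hr1 ha
  have hInt : ∫ H in T, (∑ α ∈ S, ‖G α H‖) ^ 2 ≤ D * a ^ (-s) := by
    have hpos : 0 ≤ D * a ^ (-s) := mul_nonneg hD0 (Real.rpow_nonneg ha0.le _)
    rw [integral_eq_lintegral_of_nonneg_ae (Filter.Eventually.of_forall fun H => sq_nonneg _)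
      (by
        refine Continuous.aestronglyMeasurable ?_
        exact (continuous_finsetSum _ fun α _ => (hGc α).norm).pow 2)]
    apply ENNReal.toReal_le_of_le_ofReal hpos
    calc ∫⁻ H in T, ENNReal.ofReal ((∑ α ∈ S, ‖G α H‖) ^ 2)
        ≤ ∫⁻ H in T, ENNReal.ofReal S.card * ∑ α ∈ S, ‖G α H‖ₑ ^ 2 := by
          apply lintegral_mono
          intro H
          beta_reduce
          have e : ∑ α ∈ S, ‖G α H‖ₑ ^ 2 = ENNReal.ofReal (∑ α ∈ S, ‖G α H‖ ^ 2) := by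
            rw [ENNReal.ofReal_sum_of_nonneg fun α _ => sq_nonneg _]
            congr 1
            ext α
            rw [← ofReal_norm, ENNReal.ofReal_pow (norm_nonneg _)]
          rw [e, ← ENNReal.ofReal_mul (Nat.cast_nonneg _)]
          exact ENNReal.ofReal_le_ofReal sq_sum_le_card_mul_sum_sq
      _ = ENNReal.ofReal S.card * ∑ α ∈ S, ∫⁻ H in T, ‖G α H‖ₑ ^ 2 := by
          rw [lintegral_const_mul' _ _ ENNReal.ofReal_ne_top, lintegral_finsetSum]
          intro α _
          exact (hGc α).measurable.enorm.pow_const 2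
      _ ≤ ENNReal.ofReal S.card * ∑ α ∈ S, ENNReal.ofReal (C α * a ^ (-s)) := by
          gcongr with α _
          exact hGt α
      _ = _ := by
          rw [← ENNReal.ofReal_sum_of_nonneg fun α _ => mul_nonneg (hC0 α).le (Real.rpow_nonneg ha0.le _),
            ← ENNReal.ofReal_mul (Nat.cast_nonneg _), ← Finset.sum_mul, hD, mul_assoc]
  calc _ ≤ Real.sqrt (D * a ^ (-s)) := Real.sqrt_le_sqrt hInt
    _ = Real.sqrt D * a ^ (-z.re - 1 / 2) := by
      rw [Real.sqrt_mul hD0]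
      congr 1
      rw [Real.sqrt_eq_rpow, ← Real.rpow_mul ha0.le]
      congr 1
      rw [hs]; ring
    _ ≤ _ := by
      gcongr
      linarith
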